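/- arXiv:1008.2295 — 2 statements merged into one kernel-verified Lean document; each statement's English description precedes it below -/
import Mathlib

section
/- Let m be a positive integer and let α₁,...,α_k be positive irrational real numbers satisfying Σ_{i=1}^k 1/α_i = m. Then the family {S(α₁,0),...,S(α_k,0)} of homogeneous Beatty sequences is an eventual exact m-cover if and only if k is even, say k = 2l, and there is a permutation σ of {1,...,k} such that 1/α_{σ(2i−1)} + 1/α_{σ(2i)} is an integer for every i = 1,...,l. -/
/-!
Put `θ i = 1 / α i`. A natural number `N` is taken by `S(α i, 0)` exactly
`⌊(N + 1) θ i⌋ - ⌊N θ i⌋` times, so the total multiplicity of `N` is `m + F N - F (N + 1)`, where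
`F N = ∑ i, fract (N θ i)` (`sum_beattyCount`). Hence the family is an eventual exact `m`-cover iff
`F` is eventually constant (`isEEC_iff`). If the `θ i` pair up to integers, then
`fract (N θ) + fract (N θ') = 1` for each pair and
each `N ≥ 1`, and `F` is constant from there on.

For the converse, take the Cesàro mean of `F N * exp (-2πi N t)` for `t : ℝ / ℤ` of infinite order.
It is zero when `F` is eventually constant. On the other hand, the mean of
`fract (N θ) * exp (-2πi N t)` is the Fourier coefficient `-1 / (2πi n)` of the sawtooth if
`t = n θ` in `ℝ / ℤ`, and zero if `t` is not a multiple of `θ` (`hasMean_saw`). This is Weyl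
equidistribution: it holds for continuous functions because trigonometric polynomials are dense
(`hasMean_continuous`), and the sawtooth `x` is within `x ^ (K + 1) + (1 - x) ^ (K + 1)` of the
function `x - x ^ (K + 2)`, both being continuous on the circle. Therefore the sum of `1 / n` over
all `(i, n)` with `n θ i = t` vanishes for every such `t` (`sum_invMul_eq_zero`).

These relations force each class `y` in `ℝ / ℤ` to occur among the `θ i` as often as `-y`
(`cnt_neg`): being a multiple `n • y` with `|n| ≥ 2` is a strict partial order on elements of
infinite order, and at a minimal violating class `t` only the terms `n = ± 1` contribute.
A symmetric family of elements of infinite order splits into opposite pairs (`exists_pairing`).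
-/

open scoped BigOperators

/-- The number of positive integers `n` with `⌊n·α + β⌋ = N`, i.e. the multiplicity
of `N` in the Beatty sequence `S(α,β)`. -/
noncomputable def beattyCount (α β : ℝ) (N : ℤ) : ℕ :=
  Nat.card {n : ℕ // 0 < n ∧ ⌊(n : ℝ) * α + β⌋ = N}

/-- The family `{S(α i, β i)}` is an eventual exact `m`-cover. -/
def IsEEC {k : ℕ} (α β : Fin k → ℝ) (m : ℕ) : Prop :=
  ∃ N₀ : ℤ, ∀ N : ℤ, N ≥ N₀ → (∑ i, beattyCount (α i) (β i) N) = m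

open Filter Topology

/-! ### Cesàro means -/

/-- `u` has Cesàro mean `z`. -/
def HasMean (u : ℕ → ℂ) (z : ℂ) : Prop :=
  Tendsto (fun X : ℕ => (X : ℂ)⁻¹ * ∑ N ∈ Finset.range X, u N) atTop (𝓝 z)

namespace HasMean

lemma add {u v : ℕ → ℂ} {z w : ℂ} (hu : HasMean u z) (hv : HasMean v w) :
    HasMean (fun N => u N + v N) (z + w) := by
  simpa only [HasMean, Finset.sum_add_distrib, mul_add] using Tendsto.add hu hv

lemma const_mul {u : ℕ → ℂ} {z : ℂ} (c : ℂ) (hu : HasMean u z) :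
    HasMean (fun N => c * u N) (c * z) := by
  have := Tendsto.const_mul c hu
  simpa only [HasMean, ← Finset.mul_sum, mul_left_comm] using this

lemma zero : HasMean (fun _ => 0) 0 := by simp [HasMean]

lemma sum {ι : Type*} (s : Finset ι) {u : ι → ℕ → ℂ} {z : ι → ℂ}
    (h : ∀ i ∈ s, HasMean (u i) (z i)) :
    HasMean (fun N => ∑ i ∈ s, u i N) (∑ i ∈ s, z i) := by
  classical
  induction s using Finset.induction_on with
  | empty => simpa using zero
  | insert a s ha ih =>
    simp only [Finset.sum_insert ha]
    exact (h a (by simp)).add (ih fun i hi => h i (by simp [hi]))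

/-- Means pass to limits of sequences approximated in the upper-mean sense. -/
lemma of_approx {u : ℕ → ℂ} {z : ℂ}
    (h : ∀ ε > 0, ∃ v w, HasMean v w ∧ ‖w - z‖ ≤ ε ∧
      ∀ᶠ X : ℕ in atTop, ‖(X : ℂ)⁻¹ * ∑ N ∈ Finset.range X, (u N - v N)‖ ≤ ε) :
    HasMean u z := by
  rw [HasMean, Metric.tendsto_nhds]
  intro ε hε
  obtain ⟨v, w, hv, hw, hX⟩ := h (ε / 4) (by positivity)
  filter_upwards [hX, Metric.tendsto_nhds.1 hv (ε / 4) (by positivity)] with X h1 h2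
  rw [dist_eq_norm] at h2 ⊢
  rw [Finset.sum_sub_distrib, mul_sub] at h1
  calc _ = ‖((X : ℂ)⁻¹ * ∑ N ∈ Finset.range X, u N - (X : ℂ)⁻¹ * ∑ N ∈ Finset.range X, v N)
            + ((X : ℂ)⁻¹ * ∑ N ∈ Finset.range X, v N - w) + (w - z)‖ := by ring_nf
    _ ≤ _ := norm_add₃_le
    _ < ε := by linarith

/-- The geometric sequence of a unimodular number `≠ 1` averages to zero. -/
lemma geom {z : ℂ} (hz : ‖z‖ = 1) : HasMean (fun N => z ^ N) (if z = 1 then 1 else 0) := by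
  split_ifs with h
  · subst h
    refine tendsto_const_nhds.congr' ?_
    filter_upwards [eventually_ne_atTop 0] with X hX
    have : (X : ℂ) ≠ 0 := by exact_mod_cast hX
    simp [this]
  · have h1 : z - 1 ≠ 0 := sub_ne_zero.2 h
    have hlim : Tendsto (fun X : ℕ => ((X : ℝ))⁻¹ * (2 / ‖z - 1‖)) atTop (𝓝 0) := by
      simpa using (tendsto_inv_atTop_nhds_zero_nat (𝕜 := ℝ)).mul_const (2 / ‖z - 1‖)
    refine squeeze_zero_norm (fun X => ?_) hlim
    rw [geom_sum_eq h, norm_mul, norm_inv, Complex.norm_natCast, norm_div]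
    gcongr
    calc _ ≤ ‖z ^ X‖ + ‖(1 : ℂ)‖ := norm_sub_le _ _
      _ = 2 := by rw [norm_pow, hz]; norm_num

lemma unique {u : ℕ → ℂ} {z w : ℂ} (h : HasMean u z) (h' : HasMean u w) : z = w :=
  tendsto_nhds_unique h h'

/-- The mean ignores finitely many terms. -/
lemma congr_eventually {u v : ℕ → ℂ} {z : ℂ} (h : HasMean u z) (huv : ∀ᶠ N in atTop, u N = v N) :
    HasMean v z := by
  obtain ⟨K, hK⟩ := eventually_atTop.1 huv
  have hlim : Tendsto (fun X : ℕ => (X : ℂ)⁻¹ * ∑ N ∈ Finset.range K, (v N - u N)) atTop (𝓝 0) := by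
    simpa using (tendsto_inv_atTop_nhds_zero_nat (𝕜 := ℂ)).mul_const _
  have := Tendsto.add h hlim
  rw [add_zero] at this
  refine this.congr' ?_
  filter_upwards [eventually_ge_atTop K] with X hX
  have : ∑ N ∈ Finset.range K, (v N - u N) = ∑ N ∈ Finset.range X, (v N - u N) := by
    refine Finset.sum_subset (by simpa using hX) fun N _ hN => ?_
    rw [hK N (by simpa using hN), sub_self]
  rw [this, Finset.sum_sub_distrib]
  ring

end HasMean

/-! ### Equidistribution against continuous functions -/

/-- The weight `N ↦ exp (-2πi N t)`. -/
noncomputable def twist (t : UnitAddCircle) (N : ℕ) : ℂ := (AddCircle.toCircle (-(N • t)) : ℂ)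

lemma norm_twist (t : UnitAddCircle) (N : ℕ) : ‖twist t N‖ = 1 := Circle.norm_coe _

lemma twist_zero (N : ℕ) : twist 0 N = 1 := by simp [twist]

/-- A monomial sampled along `N • θ` and twisted by `t` is a geometric sequence. -/
lemma hasMean_fourier (θ t : UnitAddCircle) (n : ℤ) :
    HasMean (fun N => fourier n (N • θ) * twist t N) (if n • θ = t then 1 else 0) := by
  have key := HasMean.geom (z := (AddCircle.toCircle (n • θ - t) : ℂ)) (Circle.norm_coe _)
  have h1 : ((AddCircle.toCircle (n • θ - t) : ℂ) = 1) ↔ n • θ = t := by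
    rw [← sub_eq_zero (a := n • θ), ← (AddCircle.injective_toCircle (T := 1) one_ne_zero).eq_iff,
      AddCircle.toCircle_zero, ← Circle.coe_one, Circle.coe_inj]
  simp only [h1] at key
  convert key using 2 with N
  rw [fourier_apply, twist, ← Circle.coe_mul, ← AddCircle.toCircle_add, ← Circle.coe_pow,
    ← AddCircle.toCircle_nsmul]
  congr 2
  rw [nsmul_sub, smul_comm, sub_eq_add_neg]

/-- Weyl equidistribution against continuous functions, for an arbitrary twist: `Λ` is whichever
bounded functional has the right values on monomials. -/
lemma hasMean_continuous (θ t : UnitAddCircle) (Λ : C(UnitAddCircle, ℂ) →L[ℂ] ℂ)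
    (hΛ : ∀ n : ℤ, Λ (fourier n) = if n • θ = t then 1 else 0) (g : C(UnitAddCircle, ℂ)) :
    HasMean (fun N => g (N • θ) * twist t N) (Λ g) := by
  have hspan : ∀ p ∈ Submodule.span ℂ (Set.range (@fourier 1)),
      HasMean (fun N => p (N • θ) * twist t N) (Λ p) := by
    intro p hp
    induction hp using Submodule.span_induction with
    | mem x hx =>
      obtain ⟨n, rfl⟩ := hx
      rw [hΛ]; exact hasMean_fourier θ t n
    | zero => simpa using HasMean.zero
    | add x y _ _ hx hy => simpa [add_mul] using hx.add hy
    | smul a x _ hx => simpa [mul_assoc] using hx.const_mul a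
  refine HasMean.of_approx fun ε hε => ?_
  have hg : g ∈ (Submodule.span ℂ (Set.range (@fourier 1))).topologicalClosure := by
    rw [span_fourier_closure_eq_top]; trivial
  have hδ : 0 < ε / (‖Λ‖ + 1) := by positivity
  obtain ⟨p, hp, hgp⟩ := Metric.mem_closure_iff.1 hg _ hδ
  rw [dist_eq_norm] at hgp
  have hle : ε / (‖Λ‖ + 1) ≤ ε := div_le_self hε.le (by linarith [norm_nonneg Λ])
  refine ⟨_, _, hspan p hp, ?_, Eventually.of_forall fun X => ?_⟩
  · rw [← map_sub]
    calc _ ≤ ‖Λ‖ * ‖p - g‖ := Λ.le_opNorm _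
      _ ≤ (‖Λ‖ + 1) * (ε / (‖Λ‖ + 1)) := by
        rw [norm_sub_rev]; gcongr; linarith
      _ = ε := by field_simp
  · rw [norm_mul, norm_inv, Complex.norm_natCast]
    have : ‖∑ N ∈ Finset.range X, (g (N • θ) * twist t N - p (N • θ) * twist t N)‖ ≤ X * ε := by
      refine (norm_sum_le_of_le (f := fun N => g (N • θ) * twist t N - p (N • θ) * twist t N)
        (Finset.range X) (n := fun _ => ε) fun N _ => ?_).trans (by simp)
      rw [← sub_mul, norm_mul, norm_twist, mul_one]
      exact ((g - p).norm_coe_le_norm _).trans (hgp.le.trans hle)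
    rcases Nat.eq_zero_or_pos X with rfl | hX
    · simp [hε.le]
    · have : (0 : ℝ) < X := by exact_mod_cast hX
      rw [inv_mul_le_iff₀ this]; assumption

/-- `fourierCoeff · n` as a bounded functional on continuous functions. -/
noncomputable def coeffCLM (n : ℤ) : C(UnitAddCircle, ℂ) →L[ℂ] ℂ :=
  (innerSL ℂ (fourierLp (T := 1) 2 n)).comp
    (ContinuousMap.toLp (E := ℂ) 2 AddCircle.haarAddCircle ℂ)

lemma coeffCLM_fourier (m n : ℤ) : coeffCLM m (fourier n) = if n = m then 1 else 0 := by
  have := orthonormal_iff_ite.1 (orthonormal_fourier (T := 1)) m n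
  simp only [eq_comm (a := n)]
  exact this

lemma coeffCLM_apply (n : ℤ) (g : C(UnitAddCircle, ℂ)) : coeffCLM n g = fourierCoeff g n := by
  rw [← fourierCoeff_toLp, ← fourierBasis_repr, HilbertBasis.repr_apply_apply, coe_fourierBasis]
  rfl

/-! ### The sawtooth -/

/-- The representative in `[0, 1)` of a point of `ℝ / ℤ`. -/
noncomputable def fr (y : UnitAddCircle) : ℝ := (AddCircle.equivIco 1 0 y : ℝ)

lemma fr_coe (x : ℝ) : fr (x : UnitAddCircle) = Int.fract x := by
  have := AddCircle.coe_equivIco_mk_apply (p := (1 : ℝ)) x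
  rw [div_one, mul_one] at this
  exact this

lemma fr_nonneg (y : UnitAddCircle) : 0 ≤ fr y := (AddCircle.equivIco 1 0 y).2.1

lemma fr_lt_one (y : UnitAddCircle) : fr y < 1 := by
  have := (AddCircle.equivIco 1 0 y).2.2
  exact this.trans_eq (zero_add 1)

/-- A continuous function on `[0, 1]` with equal end values, as a function on the circle. -/
noncomputable def liftC (p : ℝ → ℝ) (hp : Continuous p) (h : p 0 = p 1) : C(UnitAddCircle, ℂ) :=
  ⟨AddCircle.liftIco 1 0 (fun x => (p x : ℂ)),
    AddCircle.liftIco_zero_continuous (by rw [h]) (by fun_prop)⟩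

lemma liftC_apply (p : ℝ → ℝ) (hp : Continuous p) (h : p 0 = p 1) (y : UnitAddCircle) :
    liftC p hp h y = p (fr y) := rfl

lemma coeffCLM_liftC (p : ℝ → ℝ) (hp : Continuous p) (h : p 0 = p 1) (n : ℤ) :
    coeffCLM n (liftC p hp h) = ∫ x in (0 : ℝ)..1, fourier (-n) (x : UnitAddCircle) * (p x : ℂ) := by
  rw [coeffCLM_apply, fourierCoeff_eq_intervalIntegral _ _ 0, div_one, one_smul, zero_add]
  refine intervalIntegral.integral_congr_Ioo_of_le zero_le_one fun x hx => ?_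
  simp only [liftC_apply, smul_eq_mul, fr_coe]
  rw [Int.fract_eq_self.2 ⟨hx.1.le, hx.2⟩]

/-- The continuous approximation `x - x ^ (K + 2)` of the sawtooth `x`. -/
noncomputable def approx (K : ℕ) : C(UnitAddCircle, ℂ) :=
  liftC (fun x => x - x ^ (K + 2)) (by fun_prop) (by norm_num)

/-- A continuous majorant of `x ^ (K + 2)`, the error made by `approx K`. -/
noncomputable def majorant (K : ℕ) : C(UnitAddCircle, ℂ) :=
  liftC (fun x => x ^ (K + 1) + (1 - x) ^ (K + 1)) (by fun_prop) (by norm_num)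

lemma coeffCLM_majorant (K : ℕ) : coeffCLM 0 (majorant K) = ((2 / (K + 2) : ℝ) : ℂ) := by
  rw [majorant, coeffCLM_liftC]
  simp only [neg_zero, fourier_zero, one_mul]
  rw [intervalIntegral.integral_ofReal]
  congr 1
  rw [intervalIntegral.integral_add (by apply Continuous.intervalIntegrable; fun_prop)
    (by apply Continuous.intervalIntegrable; fun_prop),
    intervalIntegral.integral_comp_sub_left (fun x => x ^ (K + 1)) 1]
  simp only [sub_self, sub_zero, integral_pow]
  push_cast
  simp
  ring

/-- The `n`-th Fourier coefficient of the sawtooth `x ↦ x` on `[0, 1)`. -/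
noncomputable def sawCoeff (n : ℤ) : ℂ :=
  ∫ x in (0 : ℝ)..1, fourier (-n) (x : UnitAddCircle) * (x : ℂ)

lemma norm_coeffCLM_approx_sub (K : ℕ) (n : ℤ) :
    ‖coeffCLM n (approx K) - sawCoeff n‖ ≤ 1 / (K + 2) := by
  have hf : Continuous fun x : ℝ => fourier (-n) (x : UnitAddCircle) :=
    (fourier (-n)).continuous.comp (AddCircle.continuous_mk' 1)
  rw [approx, coeffCLM_liftC, sawCoeff, ← intervalIntegral.integral_sub
    (by apply Continuous.intervalIntegrable; fun_prop)
    (by apply Continuous.intervalIntegrable; fun_prop)]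
  calc _ ≤ ∫ x in (0 : ℝ)..1, x ^ (K + 1) := by
        refine intervalIntegral.norm_integral_le_of_norm_le zero_le_one
          (.of_forall fun x hx => ?_) (by apply Continuous.intervalIntegrable; fun_prop)
        have : fourier (-n) (x : UnitAddCircle) * ((x - x ^ (K + 2) : ℝ) : ℂ)
            - fourier (-n) (x : UnitAddCircle) * (x : ℂ)
            = - (fourier (-n) (x : UnitAddCircle) * ((x ^ (K + 2) : ℝ) : ℂ)) := by
          push_cast; ring
        rw [this, norm_neg, norm_mul, fourier_apply, Circle.norm_coe, one_mul, Complex.norm_real,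
          Real.norm_of_nonneg (by have := hx.1; positivity)]
        exact pow_le_pow_of_le_one hx.1.le hx.2 (by omega)
    _ = 1 / (K + 2) := by
        rw [integral_pow]
        push_cast
        simp
        ring

lemma sawCoeff_eq {n : ℤ} (hn : n ≠ 0) : sawCoeff n = -1 / (2 * Real.pi * Complex.I) * (n : ℂ)⁻¹ := by
  set a : ℂ := -(2 * Real.pi * Complex.I * n) with ha
  have hn' : (n : ℂ) ≠ 0 := by exact_mod_cast hn
  have ha0 : a ≠ 0 := by
    rw [ha]
    exact neg_ne_zero.2 (mul_ne_zero Complex.two_pi_I_ne_zero hn')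
  have hexp : Complex.exp a = 1 := by
    rw [Complex.exp_eq_one_iff]; exact ⟨-n, by rw [ha]; push_cast; ring⟩
  have hint : sawCoeff n = ∫ x in (0 : ℝ)..1, Complex.exp (a * x) * x := by
    refine intervalIntegral.integral_congr fun x _ => ?_
    simp only [fourier_coe_apply]
    congr 2
    rw [ha]; push_cast; ring
  have hd : ∀ x ∈ Set.uIcc (0 : ℝ) 1, HasDerivAt
      (fun x : ℝ => Complex.exp (a * x) * (x / a - 1 / a ^ 2)) (Complex.exp (a * x) * x) x := by
    intro x _
    have h1 : HasDerivAt (fun x : ℝ => (x : ℂ)) 1 x := HasDerivAt.ofReal_comp (hasDerivAt_id x)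
    have h2 := (h1.const_mul a).cexp.mul ((h1.div_const a).sub_const (1 / a ^ 2))
    refine h2.congr_deriv ?_
    field_simp
    ring
  rw [hint, intervalIntegral.integral_eq_sub_of_hasDerivAt hd
    (by apply Continuous.intervalIntegrable; fun_prop)]
  simp only [Complex.ofReal_one, mul_one, hexp, Complex.ofReal_zero, mul_zero, Complex.exp_zero]
  rw [ha]
  have := Complex.two_pi_I_ne_zero
  have hpi : (Real.pi : ℂ) ≠ 0 := by exact_mod_cast Real.pi_ne_zero
  field_simp
  ring

/-- Twisted means of the sawtooth, by sandwiching it between continuous functions. -/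
lemma hasMean_saw_aux (θ t : UnitAddCircle) (hθ : ∀ n : ℤ, n • θ = 0 → n = 0)
    (Λ : C(UnitAddCircle, ℂ) →L[ℂ] ℂ)
    (hΛ : ∀ n : ℤ, Λ (fourier n) = if n • θ = t then 1 else 0) (z : ℂ)
    (hz : ∀ K : ℕ, ‖Λ (approx K) - z‖ ≤ 1 / (K + 2)) :
    HasMean (fun N => fr (N • θ) * twist t N) z := by
  refine HasMean.of_approx fun ε hε => ?_
  -- The mean of `majorant K` is `2 / (K + 2)`, so from some point on its averages are below
  -- `3 / (K + 2)`.
  obtain ⟨K, hK⟩ := exists_nat_gt (3 / ε)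
  have hKε : 3 / ((K : ℝ) + 2) ≤ ε := by
    rw [div_lt_iff₀ hε] at hK
    rw [div_le_iff₀ (by positivity)]
    nlinarith
  refine ⟨_, _, hasMean_continuous θ t Λ hΛ (approx K), (hz K).trans (le_trans ?_ hKε), ?_⟩
  · gcongr; norm_num
  have hmaj := hasMean_continuous θ 0 (coeffCLM 0) (fun n => by
    rw [coeffCLM_fourier]
    congr 1
    exact propext ⟨fun h => by simp [h], hθ n⟩) (majorant K)
  rw [coeffCLM_majorant] at hmaj
  have hnorm := hmaj.norm
  rw [Complex.norm_real, Real.norm_of_nonneg (by positivity)] at hnorm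
  have hlt : 2 / ((K : ℝ) + 2) < 3 / (K + 2) := by gcongr; norm_num
  filter_upwards [hnorm.eventually_lt_const hlt] with X hX
  refine le_trans ?_ (hX.le.trans hKε)
  rw [norm_mul, norm_mul]
  gcongr
  have hsum : ∑ N ∈ Finset.range X, majorant K (N • θ) * twist 0 N =
      ((∑ N ∈ Finset.range X, (fr (N • θ) ^ (K + 1) + (1 - fr (N • θ)) ^ (K + 1)) : ℝ) : ℂ) := by
    rw [Complex.ofReal_sum]
    refine Finset.sum_congr rfl fun N _ => ?_
    rw [twist_zero, mul_one]; rfl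
  rw [hsum, Complex.norm_real]
  refine le_trans ?_ (le_abs_self _)
  refine norm_sum_le_of_le _ fun N _ => ?_
  have h0 := fr_nonneg (N • θ)
  have h1 := fr_lt_one (N • θ)
  have : (fr (N • θ) : ℂ) * twist t N - approx K (N • θ) * twist t N
      = ((fr (N • θ) ^ (K + 2) : ℝ) : ℂ) * twist t N := by
    rw [approx, liftC_apply]; push_cast; ring
  rw [this, norm_mul, norm_twist, mul_one, Complex.norm_real, Real.norm_of_nonneg (by positivity)]
  have h2 : (0 : ℝ) ≤ (1 - fr (N • θ)) ^ (K + 1) := pow_nonneg (by linarith) _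
  have h3 := pow_le_pow_of_le_one h0 h1.le (show K + 1 ≤ K + 2 by omega)
  linarith

open Classical in
/-- `1 / n` if `t = n • x` for an integer `n` (unique when `x` has infinite order), and `0` if `t`
is not a multiple of `x`. -/
noncomputable def invMul {T : Type*} [AddCommGroup T] (x t : T) : ℝ :=
  if h : ∃ n : ℤ, n • x = t then ((h.choose : ℝ))⁻¹ else 0

lemma hasMean_saw (θ t : UnitAddCircle) (hθ : ∀ n : ℤ, n • θ = 0 → n = 0) (ht : t ≠ 0) :
    HasMean (fun N => fr (N • θ) * twist t N)
      (-1 / (2 * Real.pi * Complex.I) * (invMul θ t : ℂ)) := by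
  by_cases h : ∃ n : ℤ, n • θ = t
  · have hn := h.choose_spec
    rw [invMul, dif_pos h]
    set n := h.choose
    have hn0 : n ≠ 0 := fun h0 => ht (by rw [← hn, h0, zero_smul])
    refine hasMean_saw_aux θ t hθ (coeffCLM n) (fun m => ?_) _ fun K => ?_
    · rw [coeffCLM_fourier]
      congr 1
      refine propext ⟨fun h => by rw [h, hn], fun h => ?_⟩
      exact sub_eq_zero.1 (hθ _ (by rw [sub_smul, h, hn, sub_self]))
    · have := norm_coeffCLM_approx_sub K n
      rw [sawCoeff_eq hn0] at this
      push_cast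
      exact this
  · rw [invMul, dif_neg h]
    refine hasMean_saw_aux θ t hθ 0 (fun m => ?_) _ fun K => ?_
    · rw [if_neg fun h' => h ⟨m, h'⟩]; rfl
    · simp; positivity

/-! ### Families of elements of infinite order in an abelian group -/

/-- An element of infinite order of an abelian group. -/
def InfOrder {T : Type*} [AddCommGroup T] (x : T) : Prop := ∀ n : ℤ, n • x = 0 → n = 0

section Combinatorics

variable {T : Type*} [AddCommGroup T]

lemma InfOrder.neg {x : T} (h : InfOrder x) : InfOrder (-x) := fun n hn =>
  h n (by rwa [smul_neg, neg_eq_zero] at hn)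

lemma InfOrder.ne_neg {x : T} (h : InfOrder x) : x ≠ -x := fun hx => by
  have := h 2 (by rw [two_smul]; nth_rw 2 [hx]; exact add_neg_cancel x)
  omega

lemma invMul_zsmul {x : T} (h : InfOrder x) (n : ℤ) : invMul x (n • x) = (n : ℝ)⁻¹ := by
  have hex : ∃ m : ℤ, m • x = n • x := ⟨n, rfl⟩
  rw [invMul, dif_pos hex]
  have : hex.choose = n :=
    sub_eq_zero.1 (h _ (by rw [sub_smul, hex.choose_spec, sub_self]))
  rw [this]

lemma invMul_neg {x : T} (h : InfOrder x) (t : T) : invMul (-x) t = -invMul x t := by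
  by_cases ht : ∃ n : ℤ, n • x = t
  · obtain ⟨n, rfl⟩ := ht
    have : n • x = (-n) • (-x) := by simp
    rw [invMul_zsmul h, this, invMul_zsmul h.neg]
    push_cast
    rw [inv_neg]
  · have ht' : ¬ ∃ n : ℤ, n • (-x) = t := fun ⟨n, hn⟩ => ht ⟨-n, by rw [← hn]; simp⟩
    rw [invMul, invMul, dif_neg ht, dif_neg ht', neg_zero]

/-- `a` precedes its multiples `n • a` with `|n| ≥ 2`. Requiring `a` to have infinite order makes this
a strict order. -/
def Divides (a b : T) : Prop := InfOrder a ∧ ∃ n : ℤ, 2 ≤ |n| ∧ n • a = b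

instance : IsStrictOrder T Divides where
  irrefl a := by
    rintro ⟨ha, n, hn, h⟩
    have := ha (n - 1) (by rw [sub_smul, h, one_smul, sub_self])
    have h1 : n = 1 := by omega
    rw [h1] at hn
    norm_num at hn
  trans a b c := by
    rintro ⟨ha, n, hn, rfl⟩ ⟨-, m, hm, rfl⟩
    refine ⟨ha, m * n, ?_, mul_smul _ _ _⟩
    rw [abs_mul]
    nlinarith

variable {ι : Type*} [Fintype ι]

open Classical in
/-- The number of indices `i` with `x i = y`. -/
noncomputable def cnt (x : ι → T) (y : T) : ℕ := (Finset.univ.filter fun i => x i = y).card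

/-- If all the divisor-type sums vanish then the family is symmetric under negation: at an element
`t` that is minimal for `Divides` among those violating the symmetry, only the terms `x i = ± t`
survive in the sum. -/
lemma cnt_neg (x : ι → T) (hx : ∀ i, InfOrder (x i))
    (hsum : ∀ t, InfOrder t → ∑ i, invMul (x i) t = 0) (y : T) : cnt x y = cnt x (-y) := by
  classical
  by_contra hy
  set S : Finset T := Finset.univ.image x ∪ Finset.univ.image (fun i => -x i) with hS
  have hSinf : ∀ y ∈ S, InfOrder y := by
    intro y hy
    rcases Finset.mem_union.1 hy with h | h
    · obtain ⟨i, -, rfl⟩ := Finset.mem_image.1 h; exact hx i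
    · obtain ⟨i, -, rfl⟩ := Finset.mem_image.1 h; exact (hx i).neg
  have hSneg : ∀ y ∈ S, -y ∈ S := by
    intro y hy
    rcases Finset.mem_union.1 hy with h | h
    · obtain ⟨i, -, rfl⟩ := Finset.mem_image.1 h
      exact Finset.mem_union_right _ (Finset.mem_image.2 ⟨i, Finset.mem_univ _, rfl⟩)
    · obtain ⟨i, -, rfl⟩ := Finset.mem_image.1 h
      exact Finset.mem_union_left _ (Finset.mem_image.2 ⟨i, Finset.mem_univ _, (neg_neg _).symm⟩)
  have hcnt0 : ∀ y, y ∉ S → cnt x y = 0 := by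
    intro y hy
    rw [cnt, Finset.card_eq_zero, Finset.filter_eq_empty_iff]
    rintro i - rfl
    exact hy (Finset.mem_union_left _ (Finset.mem_image_of_mem _ (Finset.mem_univ _)))
  set P : Set T := {y | y ∈ S ∧ cnt x y ≠ cnt x (-y)} with hP
  have hPfin : P.Finite := S.finite_toSet.subset fun y hy => hy.1
  have hyP : y ∈ P := by
    refine ⟨?_, hy⟩
    by_contra h
    have h' : -y ∉ S := fun h' => h (by simpa using hSneg _ h')
    exact hy (by rw [hcnt0 _ h, hcnt0 _ h'])
  obtain ⟨t, ⟨htS, htc⟩, hmin⟩ : ∃ t ∈ P, ∀ z ∈ P, ¬ Divides z t := by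
    have hwf : P.WellFoundedOn Divides := hPfin.wellFoundedOn
    obtain ⟨t, -, ht⟩ := hwf.has_min (Set.univ : Set P) ⟨⟨y, hyP⟩, trivial⟩
    exact ⟨t, t.2, fun z hz => ht ⟨z, hz⟩ trivial⟩
  have htI := hSinf t htS
  have h1 : ∑ y ∈ S, (cnt x y : ℝ) * invMul y t = 0 := by
    rw [← hsum t htI, ← Finset.sum_fiberwise_of_maps_to (s := Finset.univ) (t := S) (g := x)
      (fun i _ => Finset.mem_union_left _ (Finset.mem_image_of_mem _ (Finset.mem_univ _)))]
    refine Finset.sum_congr rfl fun y _ => ?_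
    rw [Finset.sum_congr rfl (g := fun _ => invMul y t)
      (fun i hi => by rw [(Finset.mem_filter.1 hi).2])]
    rw [Finset.sum_const, nsmul_eq_mul]
    rfl
  have h2 : ∑ y ∈ S, (cnt x (-y) : ℝ) * invMul y t = 0 := by
    rw [← neg_eq_zero, ← Finset.sum_neg_distrib, ← h1]
    refine Finset.sum_nbij' (fun y => -y) (fun y => -y) hSneg hSneg (by simp) (by simp) ?_
    intro y hy
    rw [invMul_neg (hSinf y hy)]
    ring
  have h3 : ∑ y ∈ S, ((cnt x y : ℝ) - cnt x (-y)) * invMul y t = 0 := by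
    simp only [sub_mul, Finset.sum_sub_distrib, h1, h2, sub_self]
  have hsub : ({t, -t} : Finset T) ⊆ S := by
    intro z hz
    simp only [Finset.mem_insert, Finset.mem_singleton] at hz
    rcases hz with rfl | rfl
    exacts [htS, hSneg _ htS]
  rw [← Finset.sum_subset hsub, Finset.sum_pair htI.ne_neg, invMul_neg htI, neg_neg] at h3
  · have h4 : invMul t t = 1 := by simpa using invMul_zsmul htI 1
    rw [h4] at h3
    exact htc (by exact_mod_cast (show (cnt x t : ℝ) = cnt x (-t) by linarith))
  · intro z hz hzt
    simp only [Finset.mem_insert, Finset.mem_singleton, not_or] at hzt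
    by_cases hc : cnt x z = cnt x (-z)
    · rw [hc]; simp
    by_cases hn : ∃ n : ℤ, n • z = t
    · obtain ⟨n, hn⟩ := hn
      exfalso
      refine hmin z ⟨hz, hc⟩ ⟨hSinf z hz, n, ?_, hn⟩
      by_contra hlt
      have : n = 0 ∨ n = 1 ∨ n = -1 := by
        have := abs_lt.1 (not_le.1 hlt)
        omega
      rcases this with rfl | rfl | rfl
      · rw [zero_smul] at hn
        have := htI 1 (by rw [← hn]; simp)
        omega
      · exact hzt.1 (by simpa using hn)
      · exact hzt.2 (by rw [← hn]; simp)
    · rw [invMul, dif_neg hn, mul_zero]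

/-- A family that is symmetric under negation splits into opposite pairs. The indices whose value
precedes its opposite in a fixed well-order form one half, matched with the other half fibre by
fibre. -/
lemma exists_pairing (x : ι → T) (hx : ∀ i, InfOrder (x i)) (h : ∀ y, cnt x y = cnt x (-y)) :
    ∃ (l : ℕ) (e : Fin l × Fin 2 ≃ ι), ∀ i, x (e (i, 0)) + x (e (i, 1)) = 0 := by
  classical
  let P : T → Prop := fun y => WellOrderingRel y (-y)
  have hPneg : ∀ y, InfOrder y → (P (-y) ↔ ¬ P y) := by
    intro y hy
    simp only [P, neg_neg]
    refine ⟨fun h1 h2 => asymm h1 h2, fun h1 => ?_⟩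
    rcases trichotomous_of WellOrderingRel y (-y) with h2 | h2 | h2
    exacts [absurd h2 h1, absurd h2 hy.ne_neg, h2]
  let A := {i // P (x i)}
  let B := {i // ¬ P (x i)}
  have hcard : ∀ y, Nonempty ({a : A // x a = y} ≃ {b : B // -x b = y}) := by
    intro y
    by_cases hy : InfOrder y ∧ P y
    · obtain ⟨hyI, hyP⟩ := hy
      have hc : Fintype.card {i // x i = y} = Fintype.card {i // x i = -y} := by
        rw [Fintype.card_subtype, Fintype.card_subtype]
        exact h y
      refine ⟨.trans ?_ ((Fintype.equivOfCardEq hc).trans ?_)⟩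
      · exact
          { toFun := fun a => ⟨a.1.1, a.2⟩
            invFun := fun i => ⟨⟨i.1, by rw [i.2]; exact hyP⟩, i.2⟩ }
      · exact
          { toFun := fun i => ⟨⟨i.1, by rw [i.2, hPneg y hyI]; exact not_not.2 hyP⟩, by
              simp [i.2]⟩
            invFun := fun b => ⟨b.1.1, neg_eq_iff_eq_neg.1 b.2⟩ }
    · have h1 : IsEmpty {a : A // x a = y} := ⟨fun a => hy ⟨a.2 ▸ hx _, a.2 ▸ a.1.2⟩⟩
      have h2 : IsEmpty {b : B // -x b = y} :=
        ⟨fun b => hy ⟨b.2 ▸ (hx _).neg, b.2 ▸ (hPneg _ (hx _)).2 b.1.2⟩⟩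
      exact ⟨Equiv.equivOfIsEmpty _ _⟩
  let f : A ≃ B := (Equiv.sigmaFiberEquiv fun a : A => x a).symm.trans
    ((Equiv.sigmaCongrRight fun y => (hcard y).some).trans
      (Equiv.sigmaFiberEquiv fun b : B => -x b))
  have hf : ∀ a : A, -x (f a) = x a := fun a => ((hcard (x a)).some ⟨a, rfl⟩).2
  let e0 : Fin (Fintype.card A) ≃ A := (Fintype.equivFin A).symm
  let φ : Fin (Fintype.card A) × Fin 2 → ι := fun p => if p.2 = 0 then e0 p.1 else f (e0 p.1)
  have hφ : Function.Bijective φ := by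
    constructor
    · rintro ⟨i, a⟩ ⟨j, b⟩ hij
      fin_cases a <;> fin_cases b <;> simp [φ] at hij ⊢
      · exact e0.injective (Subtype.ext hij)
      · exact (f (e0 j)).2 (hij ▸ (e0 i).2)
      · exact (f (e0 i)).2 (hij ▸ (e0 j).2)
      · exact e0.injective (f.injective (Subtype.ext hij))
    · intro i
      by_cases hi : P (x i)
      · exact ⟨(e0.symm ⟨i, hi⟩, 0), by simp [φ]⟩
      · exact ⟨(e0.symm (f.symm ⟨i, hi⟩), 1), by simp [φ]⟩
  refine ⟨_, Equiv.ofBijective φ hφ, fun i => ?_⟩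
  simp only [Equiv.ofBijective_apply, φ]
  simp [← hf (e0 i)]

end Combinatorics

/-! ### Counting functions and fractional parts -/

lemma infOrder_coe {θ : ℝ} (h : Irrational θ) : InfOrder (θ : UnitAddCircle) := by
  intro n hn
  rw [← AddCircle.coe_zsmul, AddCircle.coe_eq_zero_iff] at hn
  obtain ⟨m, hm⟩ := hn
  by_contra hn0
  refine (h.intCast_mul hn0).ne_int m ?_
  simpa using hm.symm

lemma fr_nsmul (N : ℕ) (θ : ℝ) : fr (N • (θ : UnitAddCircle)) = Int.fract (N * θ) := by
  rw [← AddCircle.coe_nsmul, fr_coe, nsmul_eq_mul]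

/-- The positive integers `n` with `⌊n α⌋ = N` are those with `⌊N / α⌋ < n ≤ ⌊(N + 1) / α⌋`;
irrationality of `α` excludes `n α = N` and `n α = N + 1`. -/
lemma beattyCount_eq {α : ℝ} (hpos : 0 < α) (hirr : Irrational α) (N : ℕ) :
    (beattyCount α 0 (N : ℤ) : ℤ) = ⌊((N + 1 : ℕ) : ℝ) * (1 / α)⌋ - ⌊(N : ℝ) * (1 / α)⌋ := by
  have hirr' : Irrational (1 / α) := by simpa using hirr.inv
  have h0 : ∀ M : ℕ, 0 ≤ (M : ℝ) * (1 / α) := fun M => by positivity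
  have hset : {n : ℕ | 0 < n ∧ ⌊(n : ℝ) * α + 0⌋ = (N : ℤ)} =
      ↑(Finset.Ioc ⌊(N : ℝ) * (1 / α)⌋₊ ⌊((N + 1 : ℕ) : ℝ) * (1 / α)⌋₊) := by
    ext n
    simp only [Set.mem_ofPred_eq, Finset.coe_Ioc, Set.mem_Ioc, add_zero]
    rw [Int.floor_eq_iff, Nat.floor_lt (h0 N), Nat.le_floor_iff (h0 (N + 1)), mul_one_div,
      mul_one_div, div_lt_iff₀ hpos, le_div_iff₀ hpos]
    push_cast
    constructor
    · rintro ⟨hn, h1, h2⟩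
      refine ⟨lt_of_le_of_ne h1 fun h => ?_, h2.le⟩
      exact (hirr.natCast_mul hn.ne').ne_nat N h.symm
    · rintro ⟨h1, h2⟩
      have hn : 0 < n := by
        rcases Nat.eq_zero_or_pos n with rfl | hn
        · exfalso
          have : (0 : ℝ) ≤ N := Nat.cast_nonneg N
          simp at h1
          linarith
        · exact hn
      refine ⟨hn, h1.le, lt_of_le_of_ne h2 fun h => ?_⟩
      exact (hirr.natCast_mul hn.ne').ne_nat (N + 1) (by push_cast; exact h)
  have hcard : beattyCount α 0 (N : ℤ) =
      ⌊((N + 1 : ℕ) : ℝ) * (1 / α)⌋₊ - ⌊(N : ℝ) * (1 / α)⌋₊ := by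
    rw [← Nat.card_Ioc, ← Set.ncard_coe_finset, ← hset]
    rfl
  have hle : ⌊(N : ℝ) * (1 / α)⌋₊ ≤ ⌊((N + 1 : ℕ) : ℝ) * (1 / α)⌋₊ := by
    apply Nat.floor_le_floor
    gcongr
    omega
  rw [hcard, Nat.cast_sub hle, Int.natCast_floor_eq_floor (h0 _), Int.natCast_floor_eq_floor (h0 _)]

/-- The sum of the fractional parts of `N / α i`. -/
noncomputable def fractSum {k : ℕ} (α : Fin k → ℝ) (N : ℕ) : ℝ :=
  ∑ i, Int.fract ((N : ℝ) * (1 / α i))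

lemma sum_beattyCount {m k : ℕ} {α : Fin k → ℝ} (hpos : ∀ i, 0 < α i)
    (hirr : ∀ i, Irrational (α i)) (hsum : ∑ i, 1 / α i = (m : ℝ)) (N : ℕ) :
    ((∑ i, beattyCount (α i) 0 (N : ℤ) : ℕ) : ℝ) = m + fractSum α N - fractSum α (N + 1) := by
  have h : ∀ i, (beattyCount (α i) 0 (N : ℤ) : ℝ) = 1 / α i + Int.fract ((N : ℝ) * (1 / α i))
      - Int.fract (((N + 1 : ℕ) : ℝ) * (1 / α i)) := by
    intro i
    have := congrArg (Int.cast : ℤ → ℝ) (beattyCount_eq (hpos i) (hirr i) N)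
    rw [Int.cast_natCast, Int.cast_sub] at this
    rw [this, Int.fract, Int.fract]
    push_cast
    ring
  push_cast
  simp only [h, Finset.sum_sub_distrib, Finset.sum_add_distrib, hsum]
  rfl

lemma isEEC_iff {m k : ℕ} {α : Fin k → ℝ} (hpos : ∀ i, 0 < α i)
    (hirr : ∀ i, Irrational (α i)) (hsum : ∑ i, 1 / α i = (m : ℝ)) :
    IsEEC α (fun _ => 0) m ↔ ∃ c : ℝ, ∀ᶠ N : ℕ in atTop, fractSum α N = c := by
  constructor
  · rintro ⟨N₀, h⟩
    refine ⟨fractSum α (max 1 N₀.toNat), ?_⟩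
    filter_upwards [eventually_ge_atTop (max 1 N₀.toNat)] with N hN
    induction N, hN using Nat.le_induction with
    | base => rfl
    | succ N hN ih =>
      have h1 := sum_beattyCount hpos hirr hsum N
      have h2 : N₀.toNat ≤ N := le_trans (le_max_right _ _) hN
      rw [h N (by omega)] at h1
      linarith
  · rintro ⟨c, hc⟩
    obtain ⟨K, hK⟩ := eventually_atTop.1 hc
    refine ⟨(max 1 K : ℕ), fun N hN => ?_⟩
    obtain ⟨N, rfl⟩ := Int.eq_ofNat_of_zero_le (show 0 ≤ N by omega)
    have hN' : max 1 K ≤ N := by exact_mod_cast hN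
    have h1 := sum_beattyCount hpos hirr hsum N
    rw [hK N (by omega), hK (N + 1) (by omega), add_sub_cancel_right] at h1
    exact_mod_cast h1

/-- If the fractional parts have an eventually constant sum, comparing the means of both sides
against the twist by `t` gives the vanishing of the divisor-type sum at `t`. -/
lemma sum_invMul_eq_zero {k : ℕ} {α : Fin k → ℝ} (hirr : ∀ i, Irrational (1 / α i)) {c : ℝ}
    (hc : ∀ᶠ N : ℕ in atTop, fractSum α N = c) (t : UnitAddCircle) (ht : InfOrder t) :
    ∑ i, invMul ((1 / α i : ℝ) : UnitAddCircle) t = 0 := by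
  have ht0 : t ≠ 0 := by
    rintro rfl
    exact one_ne_zero (ht 1 (by simp))
  have h1 := HasMean.sum Finset.univ fun i _ =>
    hasMean_saw ((1 / α i : ℝ) : UnitAddCircle) t (infOrder_coe (hirr i)) ht0
  have h2 : HasMean (fun N => (c : ℂ) * twist t N) ((c : ℂ) * 0) := by
    have := (hasMean_fourier 0 t 0).const_mul (c : ℂ)
    simpa [ht0.symm] using this
  have h3 := h2.congr_eventually (v := fun N => ∑ i,
      (fr (N • ((1 / α i : ℝ) : UnitAddCircle)) : ℂ) * twist t N) (by
    filter_upwards [hc] with N hN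
    rw [← Finset.sum_mul, ← hN, fractSum, Complex.ofReal_sum]
    simp only [fr_nsmul])
  have h4 := h1.unique h3
  rw [mul_zero, ← Finset.mul_sum, ← Complex.ofReal_sum, mul_eq_zero] at h4
  rcases h4 with h4 | h4
  · exact absurd h4 (div_ne_zero (by norm_num) Complex.two_pi_I_ne_zero)
  · exact_mod_cast h4

lemma fract_add_fract {a b : ℝ} (ha : Irrational a) {z : ℤ} (h : a + b = z) :
    Int.fract a + Int.fract b = 1 := by
  have hb : b = z - a := by linarith
  have h0 : Int.fract a ≠ 0 := fun h0 => by
    obtain ⟨w, hw⟩ := Int.fract_eq_zero_iff.1 h0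
    exact ha.ne_int w hw.symm
  have : Int.fract b = 1 - Int.fract a := by
    rw [hb, sub_eq_add_neg, Int.fract_intCast_add, Int.fract_neg h0]
  linarith

theorem homogeneous_mEEC_iff_pairing (m k : ℕ) (hm : 0 < m) (α : Fin k → ℝ)
    (hpos : ∀ i, 0 < α i) (hirr : ∀ i, Irrational (α i))
    (hsum : ∑ i, 1 / α i = (m : ℝ)) :
    IsEEC α (fun _ => 0) m ↔
      ∃ (l : ℕ) (hl : k = 2 * l) (σ : Equiv.Perm (Fin k)),
        ∀ i : Fin l, ∃ z : ℤ,
          1 / α (σ ⟨2 * i.val, by have := i.isLt; omega⟩) +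
            1 / α (σ ⟨2 * i.val + 1, by have := i.isLt; omega⟩) = (z : ℝ) := by
  have hirr' : ∀ i, Irrational (1 / α i) := fun i => by simpa using (hirr i).inv
  rw [isEEC_iff hpos hirr hsum]
  constructor
  · rintro ⟨c, hc⟩
    have hinf := fun i => infOrder_coe (hirr' i)
    obtain ⟨l, e, he⟩ := exists_pairing _ hinf
      (cnt_neg _ hinf (sum_invMul_eq_zero hirr' hc))
    have hl : k = 2 * l := by
      have := Fintype.card_congr e
      simp at this
      omega
    let σ : Fin k ≃ Fin k := (finCongr (hl.trans (mul_comm 2 l))).trans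
      (finProdFinEquiv.symm.trans e)
    -- `finProdFinEquiv` sends `(i, j)` to `j + 2 * i`.
    have hσ : ∀ (i : Fin l) (j : Fin 2) (h : 2 * i.val + j.val < k),
        σ ⟨2 * i.val + j.val, h⟩ = e (i, j) := by
      intro i j h
      simp only [σ, Equiv.trans_apply]
      congr 1
      rw [Equiv.symm_apply_eq]
      ext
      simp [add_comm]
    refine ⟨l, hl, σ, fun i => ?_⟩
    have h0 := hσ i 0 (by have := i.isLt; simp; omega)
    have h1 := hσ i 1 (by have := i.isLt; simp; omega)
    simp only [Fin.val_zero, Fin.val_one, add_zero] at h0 h1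
    rw [h0, h1]
    have := he i
    rw [← AddCircle.coe_add, AddCircle.coe_eq_zero_iff] at this
    obtain ⟨z, hz⟩ := this
    exact ⟨z, by rw [← hz]; simp⟩
  · rintro ⟨l, rfl, σ, h⟩
    refine ⟨l, ?_⟩
    filter_upwards [eventually_ge_atTop 1] with N hN
    let e : Fin l × Fin 2 ≃ Fin (2 * l) :=
      (finProdFinEquiv.trans (finCongr (mul_comm l 2))).trans σ
    rw [fractSum, ← Equiv.sum_comp e, Fintype.sum_prod_type]
    rw [Finset.sum_congr rfl (g := fun _ => (1 : ℝ)) fun i _ => ?_]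
    · simp
    rw [Fin.sum_univ_two]
    have h0 : e (i, 0) = σ ⟨2 * i.val, by have := i.isLt; omega⟩ := by
      simp only [e, Equiv.trans_apply]
      congr 1
      ext
      simp
    have h1 : e (i, 1) = σ ⟨2 * i.val + 1, by have := i.isLt; omega⟩ := by
      simp only [e, Equiv.trans_apply]
      congr 1
      ext
      simp [add_comm]
    obtain ⟨z, hz⟩ := h i
    rw [h0, h1]
    refine fract_add_fract ((hirr' _).natCast_mul (by omega)) (z := N * z) ?_
    rw [← mul_add, hz]
    push_cast
    ring
end

section
/- Let m be a positive integer and let α₁,...,α_k be positive real numbers, not all rational. Then the family {S(α₁,0),...,S(α_k,0)} is an irreducible m-EEC if and only if k = 2 and 1/α₁ + 1/α₂ = m. -/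
/-!
Put `bᵢ = -1/αᵢ`. For large `N` the multiplicity of `N` in `S(αᵢ, 0)` is
`⌈(N+1)/αᵢ⌉ - ⌈N/αᵢ⌉ = 1/αᵢ + {(N+1)bᵢ} - {Nbᵢ}`. Summing over `J` and using that fractional parts
are bounded, the subfamily indexed by `J` is an eventual exact `m`-cover if and only if
`∑_J 1/αᵢ = m` and `∑_J {Nbᵢ}` is eventually constant (`isEECOn_iff`). If `αᵢ` is irrational and
`1/αᵢ + 1/αⱼ` is an integer, then `{Nbᵢ} + {Nbⱼ} = 1`, so the pair is a cover (`isEECOn_pair`).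

The main point is that every cover with an irrational member contains such a pair
(`exists_add_eq_int`); removing it leaves a cover of positive density unless nothing is left, so an
irreducible cover is a pair. To find the pair, compare Bohr means
`lim (1/M) ∑_{N<M} u(N) exp(-2πiNθ)`. The mean of `{Nb}` vanishes unless `θ ∈ ℤb + ℤ`
(`tendsto_cesaroMean_fract_twist`), and for irrational `b` it does not vanish at `θ = b`
(`not_tendsto_cesaroMean_fract_self`). Choose `θ = bᵢ` irrational with `ℤbᵢ + ℤ` maximal among these
groups. Then only the terms with `bⱼ ≡ ± bᵢ` modulo `1` contribute, and those with
`bⱼ ≡ bᵢ` contribute equal non-zero amounts. As a constant sequence has mean zero at `θ`, some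
`bⱼ ≡ -bᵢ` must occur.

Conversely, a pair can only split into two single sequences, and the one with irrational slope has
irrational density, hence is not a cover.
-/

open scoped BigOperators

/-- The subfamily `{S(α i, β i) : i ∈ I}` is an eventual exact `m`-cover. -/
def IsEECOn {k : ℕ} (α β : Fin k → ℝ) (I : Finset (Fin k)) (m : ℕ) : Prop :=
  ∃ N₀ : ℤ, ∀ N : ℤ, N ≥ N₀ → (∑ i ∈ I, beattyCount (α i) (β i) N) = m

/-- The family `{S(α i, β i)}` is an irreducible eventual exact `m`-cover:
it is an `m`-EEC and admits no splitting into an `m₁`-EEC and an `m₂`-EEC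
with `m₁ + m₂ = m`, `m₁, m₂ ≥ 1`. -/
def IsIrreducibleEEC {k : ℕ} (α β : Fin k → ℝ) (m : ℕ) : Prop :=
  IsEECOn α β Finset.univ m ∧
    ¬ ∃ (m₁ m₂ : ℕ) (J : Finset (Fin k)), 0 < m₁ ∧ 0 < m₂ ∧ m₁ + m₂ = m ∧
        IsEECOn α β J m₁ ∧ IsEECOn α β Jᶜ m₂

open Filter Topology

/-! ### Bohr means of continuous functions on the circle -/

/-- The standard additive character `x ↦ exp (2πix)` of `ℝ` with kernel `ℤ`. -/
noncomputable def unitChar (x : ℝ) : ℂ := Complex.exp (2 * Real.pi * Complex.I * x)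

lemma unitChar_add (x y : ℝ) : unitChar (x + y) = unitChar x * unitChar y := by
  simp only [unitChar, ← Complex.exp_add]
  congr 1
  push_cast
  ring

lemma unitChar_nat_mul (n : ℕ) (x : ℝ) : unitChar (n * x) = unitChar x ^ n := by
  simp only [unitChar, ← Complex.exp_nat_mul]
  congr 1
  push_cast
  ring

lemma norm_unitChar (x : ℝ) : ‖unitChar x‖ = 1 := by
  have h : (2 * Real.pi * Complex.I * x : ℂ) = ((2 * Real.pi * x : ℝ) : ℂ) * Complex.I := by
    push_cast
    ring
  rw [unitChar, h, Complex.norm_exp_ofReal_mul_I]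

lemma exists_int_of_unitChar_eq_one {x : ℝ} (h : unitChar x = 1) : ∃ p : ℤ, x = p := by
  obtain ⟨p, hp⟩ := Complex.exp_eq_one_iff.1 h
  refine ⟨p, ?_⟩
  have h2 : (2 * Real.pi * Complex.I : ℂ) ≠ 0 := Complex.two_pi_I_ne_zero
  have h3 : (x : ℂ) = (p : ℂ) := by
    apply mul_left_cancel₀ h2
    rw [hp]
    ring
  exact_mod_cast h3

lemma unitChar_int (p : ℤ) : unitChar p = 1 :=
  Complex.exp_eq_one_iff.2 ⟨p, by push_cast; ring⟩

lemma unitChar_im (x : ℝ) : (unitChar x).im = Real.sin (2 * Real.pi * x) := by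
  have h : (2 * Real.pi * Complex.I * x : ℂ) = ((2 * Real.pi * x : ℝ) : ℂ) * Complex.I := by
    push_cast
    ring
  rw [unitChar, h, Complex.exp_ofReal_mul_I_im]

lemma fourier_coe_eq_unitChar (n : ℤ) (x : ℝ) :
    fourier n (x : UnitAddCircle) = unitChar (n * x) := by
  rw [fourier_coe_apply, unitChar]
  congr 1
  push_cast
  ring

/-- The mean of the first `M` terms of `u`. Bohr means are its limits as `M → ∞`. -/
noncomputable def cesaroMean (u : ℕ → ℂ) (M : ℕ) : ℂ := (M⁻¹ : ℝ) • ∑ N ∈ Finset.range M, u N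

lemma cesaroMean_add (u v : ℕ → ℂ) (M : ℕ) :
    cesaroMean (fun N => u N + v N) M = cesaroMean u M + cesaroMean v M := by
  simp [cesaroMean, Finset.sum_add_distrib]

lemma cesaroMean_sub (u v : ℕ → ℂ) (M : ℕ) :
    cesaroMean (fun N => u N - v N) M = cesaroMean u M - cesaroMean v M := by
  simp [cesaroMean, Finset.sum_sub_distrib, mul_sub]

lemma cesaroMean_const_mul (c : ℂ) (u : ℕ → ℂ) (M : ℕ) :
    cesaroMean (fun N => c * u N) M = c * cesaroMean u M := by
  simp only [cesaroMean, ← Finset.mul_sum, Complex.real_smul]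
  ring

lemma cesaroMean_sum {ι : Type*} (s : Finset ι) (u : ι → ℕ → ℂ) (M : ℕ) :
    cesaroMean (fun N => ∑ i ∈ s, u i N) M = ∑ i ∈ s, cesaroMean (u i) M := by
  simp only [cesaroMean]
  rw [Finset.sum_comm, Finset.smul_sum]

lemma norm_cesaroMean_le {u : ℕ → ℂ} {v : ℕ → ℝ} (h : ∀ N, ‖u N‖ ≤ v N) (M : ℕ) :
    ‖cesaroMean u M‖ ≤ ‖cesaroMean (fun N => (v N : ℂ)) M‖ := by
  have hv : ∀ N, 0 ≤ v N := fun N => (norm_nonneg _).trans (h N)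
  rw [cesaroMean, cesaroMean, norm_smul, norm_smul]
  gcongr
  rw [← Complex.ofReal_sum, Complex.norm_real, Real.norm_of_nonneg (Finset.sum_nonneg fun N _ => hv N)]
  exact (norm_sum_le _ _).trans (Finset.sum_le_sum fun N _ => h N)

lemma norm_cesaroMean_le_of_le {u : ℕ → ℂ} {C : ℝ} (h : ∀ N, ‖u N‖ ≤ C) (M : ℕ) :
    ‖cesaroMean u M‖ ≤ C := by
  have hC : 0 ≤ C := (norm_nonneg _).trans (h 0)
  rw [cesaroMean, norm_smul, norm_inv, Real.norm_natCast]
  have h1 : ‖∑ N ∈ Finset.range M, u N‖ ≤ M * C := by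
    refine (norm_sum_le _ _).trans ((Finset.sum_le_sum fun N _ => h N).trans ?_)
    simp
  rcases Nat.eq_zero_or_pos M with rfl | hM
  · simpa using hC
  · rw [inv_mul_le_iff₀ (by exact_mod_cast hM)]
    exact h1

/-- A non-trivial character of `ℤ` has mean zero: its partial sums are bounded. -/
lemma tendsto_cesaroMean_unitChar {t : ℝ} (ht : ∀ p : ℤ, t ≠ p) :
    Tendsto (cesaroMean fun N => unitChar (N * t)) atTop (𝓝 0) := by
  have h1 : unitChar t ≠ 1 := fun h => by
    obtain ⟨p, hp⟩ := exists_int_of_unitChar_eq_one h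
    exact ht p hp
  have h2 : Tendsto (fun M : ℕ => (M : ℝ)⁻¹ * (2 / ‖unitChar t - 1‖)) atTop (𝓝 0) := by
    simpa using (tendsto_inv_atTop_nhds_zero_nat (𝕜 := ℝ)).mul_const (2 / ‖unitChar t - 1‖)
  refine squeeze_zero_norm (fun M => ?_) h2
  rw [cesaroMean, norm_smul, norm_inv, Real.norm_natCast]
  gcongr
  simp only [unitChar_nat_mul]
  rw [geom_sum_eq h1, norm_div]
  gcongr
  refine (norm_sub_le _ _).trans ?_
  rw [norm_pow, norm_unitChar]
  norm_num

/-- Bohr means against continuous functions on the circle are determined by the trigonometric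
monomials, since these span a dense subspace and the means are uniformly bounded functionals. -/
lemma tendsto_cesaroMean_continuousMap {b θ : ℝ} (lam : C(UnitAddCircle, ℂ) →L[ℂ] ℂ)
    (h : ∀ n : ℤ, Tendsto (cesaroMean fun N => fourier n ((N * b : ℝ) : UnitAddCircle) *
      unitChar (N * θ)) atTop (𝓝 (lam (fourier n)))) (φ : C(UnitAddCircle, ℂ)) :
    Tendsto (cesaroMean fun N => φ ((N * b : ℝ) : UnitAddCircle) * unitChar (N * θ)) atTop
      (𝓝 (lam φ)) := by
  set F : ℕ → C(UnitAddCircle, ℂ) → ℂ :=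
    fun M φ => cesaroMean (fun N => φ ((N * b : ℝ) : UnitAddCircle) * unitChar (N * θ)) M with hF
  have hequi : Equicontinuous F := by
    refine Metric.equicontinuous_of_continuity_modulus id tendsto_id F fun φ ψ M => ?_
    rw [dist_eq_norm, hF]
    simp only [← cesaroMean_sub, ← sub_mul]
    refine norm_cesaroMean_le_of_le (fun N => ?_) M
    rw [norm_mul, norm_unitChar, mul_one, id, ← dist_eq_norm]
    exact ContinuousMap.dist_apply_le_dist _
  have hclosed := hequi.isClosed_setOfPred_tendsto (l := atTop) lam.continuous
  have hspan : ((Submodule.span ℂ (Set.range (@fourier 1)) :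
      Submodule ℂ C(UnitAddCircle, ℂ)) : Set C(UnitAddCircle, ℂ)) ⊆
      {φ | Tendsto (F · φ) atTop (𝓝 (lam φ))} := by
    intro φ hφ
    induction hφ using Submodule.span_induction with
    | mem x hx =>
      obtain ⟨n, rfl⟩ := hx
      exact h n
    | zero => simp [hF, cesaroMean]
    | add x y _ _ hx hy =>
      have := Tendsto.add hx hy
      rw [← map_add] at this
      refine this.congr fun M => ?_
      simp only [hF, ← cesaroMean_add, ContinuousMap.add_apply, add_mul]
    | smul c x _ hx =>
      have := Tendsto.const_mul c hx
      rw [← smul_eq_mul, ← map_smul] at this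
      refine this.congr fun M => ?_
      simp only [hF, ← cesaroMean_const_mul, ContinuousMap.smul_apply, smul_eq_mul, mul_assoc]
  have hall := closure_minimal hspan hclosed
  have htop : φ ∈ (Submodule.span ℂ (Set.range (@fourier 1))).topologicalClosure := by
    rw [span_fourier_closure_eq_top]
    trivial
  exact hall htop

/-- The function on the circle induced by a continuous function on `[0, 1]` with equal values at
the two ends. -/
noncomputable def circleFun (F : ℝ → ℂ) (hF : ContinuousOn F (Set.Icc 0 1)) (h01 : F 0 = F 1) :
    C(UnitAddCircle, ℂ) where
  toFun := Function.Periodic.lift (f := F ∘ Int.fract) (c := (1 : ℝ)) fun x => by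
    simp [Int.fract_add_one]
  continuous_toFun := continuous_coinduced_dom.2 (hF.comp_fract'' h01)

lemma circleFun_coe (F : ℝ → ℂ) (hF : ContinuousOn F (Set.Icc 0 1)) (h01 : F 0 = F 1) (x : ℝ) :
    circleFun F hF h01 (x : UnitAddCircle) = F (Int.fract x) := rfl

/-- Orthogonality: a twist by a character outside the frequency group `ℤb + ℤ` kills the mean. -/
lemma tendsto_cesaroMean_twist {b θ : ℝ} (h : ∀ n p : ℤ, n * b + θ ≠ p) {F : ℝ → ℂ}
    (hF : ContinuousOn F (Set.Icc 0 1)) (h01 : F 0 = F 1) :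
    Tendsto (cesaroMean fun N => F (Int.fract (N * b)) * unitChar (N * θ)) atTop (𝓝 0) := by
  refine tendsto_cesaroMean_continuousMap (b := b) (θ := θ) 0 (fun n => ?_) (circleFun F hF h01)
  refine (tendsto_cesaroMean_unitChar (h n)).congr fun M => ?_
  congr 1
  ext N
  rw [fourier_coe_eq_unitChar, ← unitChar_add]
  congr 1
  ring

/-- Integration over the circle as a bounded functional. -/
noncomputable def circleMean : C(UnitAddCircle, ℂ) →L[ℂ] ℂ :=
  LinearMap.mkContinuous
    { toFun := fun φ => ∫ x, φ x ∂AddCircle.haarAddCircle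
      map_add' := fun φ ψ => by
        have hi : ∀ χ : C(UnitAddCircle, ℂ),
            MeasureTheory.Integrable (fun x => χ x) AddCircle.haarAddCircle := fun χ =>
          χ.continuous.integrable_of_hasCompactSupport (HasCompactSupport.of_compactSpace _)
        simpa using MeasureTheory.integral_add (hi φ) (hi ψ)
      map_smul' := fun c φ => by
        simpa using MeasureTheory.integral_const_mul c fun x => φ x } 1 fun φ => by
    simpa using MeasureTheory.norm_integral_le_of_norm_le_const
      (μ := AddCircle.haarAddCircle (T := 1)) (Eventually.of_forall φ.norm_coe_le_norm)

/-- Weyl's equidistribution theorem for the multiples of an irrational number. -/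
lemma tendsto_cesaroMean_weyl {b : ℝ} (hb : Irrational b) {F : ℝ → ℂ}
    (hF : ContinuousOn F (Set.Icc 0 1)) (h01 : F 0 = F 1) :
    Tendsto (cesaroMean fun N => F (Int.fract (N * b))) atTop (𝓝 (∫ x in (0 : ℝ)..1, F x)) := by
  have key := tendsto_cesaroMean_continuousMap (b := b) (θ := 0) circleMean (fun n => ?_)
    (circleFun F hF h01)
  · have hint : circleMean (circleFun F hF h01) = ∫ x in (0 : ℝ)..1, F x := by
      change ∫ x, circleFun F hF h01 x ∂AddCircle.haarAddCircle = _
      rw [AddCircle.integral_haarAddCircle, inv_one, one_smul,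
        ← UnitAddCircle.intervalIntegral_preimage 0, zero_add]
      refine intervalIntegral.integral_congr fun x hx => ?_
      rw [Set.uIcc_of_le zero_le_one] at hx
      simp only [circleFun_coe]
      rcases hx.2.eq_or_lt with rfl | h1
      · rw [Int.fract_one, h01]
      · rw [Int.fract_eq_self.2 ⟨hx.1, h1⟩]
    rw [hint] at key
    refine key.congr fun M => ?_
    congr 1
    ext N
    rw [circleFun_coe, mul_zero, show unitChar 0 = 1 by simpa using unitChar_int 0, mul_one]
  · have h1 : circleMean (fourier n) = fourierCoeff (T := 1) (fourier n) 0 := by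
      change ∫ x, _ ∂_ = ∫ x, _ ∂_
      simp
    rw [h1, fourierCoeff_fourier]
    have h2 : ∀ N : ℕ, fourier n ((N * b : ℝ) : UnitAddCircle) * unitChar (N * 0) =
        unitChar (N * (n * b)) := fun N => by
      rw [fourier_coe_eq_unitChar, ← unitChar_add]
      congr 1
      ring
    simp only [h2]
    rcases eq_or_ne n 0 with rfl | hn
    · simp only [Pi.single_eq_same]
      refine Tendsto.cesaro_smul (tendsto_const_nhds.congr fun N => ?_)
      simpa using (unitChar_int 0).symm
    · rw [Pi.single_eq_of_ne hn.symm]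
      exact tendsto_cesaroMean_unitChar fun p => (hb.intCast_mul hn).ne_int p

/-! ### Bohr means of sawtooth sequences -/

/-- The sawtooth sequence `{Nb}` has mean zero against any character whose frequency is not in
`ℤb + ℤ`. The sawtooth jumps at the integers, so it is replaced by a continuous function: exactly
for rational `b`, and up to a small error in mean for irrational `b`. -/
lemma tendsto_cesaroMean_fract_twist {b θ : ℝ} (h : ∀ n p : ℤ, n * b + θ ≠ p) :
    Tendsto (cesaroMean fun N => ((Int.fract (N * b) : ℝ) : ℂ) * unitChar (N * θ)) atTop (𝓝 0) := by
  by_cases hb : Irrational b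
  · rw [Metric.tendsto_atTop']
    intro ε hε
    obtain ⟨n, hn⟩ := exists_nat_gt (4 / ε)
    -- `{x} = ({x} - {x}ⁿ⁺¹) + {x}ⁿ⁺¹`: the first summand is continuous on the circle, and the
    -- second is dominated by the continuous function `H`, whose integral is `2 / (n + 2)`.
    set F : ℝ → ℂ := fun t => ((t - t ^ (n + 1) : ℝ) : ℂ) with hF
    set H : ℝ → ℂ := fun t => ((t ^ (n + 1) + (1 - t) ^ (n + 1) : ℝ) : ℂ) with hH
    have h1 := tendsto_cesaroMean_twist (F := F) h
      (Complex.continuous_ofReal.comp (by fun_prop)).continuousOn (by simp [hF])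
    have h2 := (tendsto_cesaroMean_weyl (F := H) hb
      (Complex.continuous_ofReal.comp (by fun_prop)).continuousOn (by simp [hH])).norm
    have hint : ‖∫ x in (0 : ℝ)..1, H x‖ = 2 / (n + 2) := by
      have h3 : ∫ x in (0 : ℝ)..1, (1 - x) ^ (n + 1) = 1 / (n + 2) := by
        rw [intervalIntegral.integral_comp_sub_left (fun x => x ^ (n + 1)) 1, integral_pow]
        push_cast
        norm_num
        ring
      rw [hH, intervalIntegral.integral_ofReal, Complex.norm_real, intervalIntegral.integral_add
        ((by fun_prop : Continuous fun x : ℝ => x ^ (n + 1)).intervalIntegrable _ _)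
        ((by fun_prop : Continuous fun x : ℝ => (1 - x) ^ (n + 1)).intervalIntegrable _ _),
        h3, integral_pow]
      have h4 : ((1 : ℝ) ^ (n + 1 + 1) - 0 ^ (n + 1 + 1)) / (((n + 1 : ℕ) : ℝ) + 1) +
          1 / ((n : ℝ) + 2) = 2 / (n + 2) := by
        push_cast
        rw [one_pow, zero_pow (by omega)]
        ring
      rw [h4, Real.norm_of_nonneg (by positivity)]
    rw [hint] at h2
    have hsmall : 2 / ((n : ℝ) + 2) < ε / 2 := by
      rw [div_lt_iff₀ hε] at hn
      rw [div_lt_iff₀ (by positivity)]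
      nlinarith
    have e1 := (Metric.tendsto_nhds.1 h1) (ε / 2) (by positivity)
    have e2 := h2.eventually (gt_mem_nhds hsmall)
    obtain ⟨M₀, hM₀⟩ := eventually_atTop.1 (e1.and e2)
    refine ⟨M₀, fun M hM => ?_⟩
    obtain ⟨h5, h6⟩ := hM₀ M (le_of_lt hM)
    rw [dist_zero_right] at h5 ⊢
    have hsplit : (fun N : ℕ => ((Int.fract (N * b) : ℝ) : ℂ) * unitChar (N * θ)) = fun N : ℕ =>
        F (Int.fract (N * b)) * unitChar (N * θ) +
        ((Int.fract (N * b) ^ (n + 1) : ℝ) : ℂ) * unitChar (N * θ) := by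
      ext N
      simp only [hF]
      push_cast
      ring
    rw [hsplit, cesaroMean_add]
    refine (norm_add_le _ _).trans_lt ?_
    have h7 : ‖cesaroMean (fun N : ℕ => ((Int.fract (N * b) ^ (n + 1) : ℝ) : ℂ) *
        unitChar (N * θ)) M‖ ≤ ‖cesaroMean (fun N : ℕ => H (Int.fract (N * b))) M‖ := by
      refine norm_cesaroMean_le (fun N => ?_) M
      have h8 := Int.fract_nonneg (N * b)
      have h9 : 0 ≤ 1 - Int.fract (N * b) := by linarith [Int.fract_lt_one (N * b)]
      rw [norm_mul, norm_unitChar, mul_one, Complex.norm_real, Real.norm_of_nonneg (by positivity)]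
      have := pow_nonneg h9 (n + 1)
      linarith
    linarith
  · rw [irrational_iff_ne_rational] at hb
    push Not at hb
    obtain ⟨a, q, hq, rfl⟩ := hb
    -- The values of `{Na/q}` lie in `[0, 1 - 1/|q|]`, where `F` is the identity.
    set F : ℝ → ℂ := fun t => ((t * min 1 (|(q : ℝ)| * (1 - t)) : ℝ) : ℂ) with hF
    have h1 := tendsto_cesaroMean_twist (F := F) h
      (Complex.continuous_ofReal.comp (by fun_prop)).continuousOn (by simp [hF])
    refine h1.congr fun M => ?_
    congr 1
    ext N
    congr 1
    set x : ℝ := N * (a / q) with hx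
    have hq0 : (0 : ℝ) < |(q : ℝ)| := abs_pos.2 (by exact_mod_cast hq)
    have hlt : 0 < |(q : ℝ)| * (1 - Int.fract x) :=
      mul_pos hq0 (by linarith [Int.fract_lt_one x])
    have hqx : |(q : ℝ)| * (1 - Int.fract x) = ((|q| * (1 + ⌊x⌋) - q.sign * (N * a) : ℤ) : ℝ) := by
      have h2 : |(q : ℝ)| = (q.sign : ℝ) * q := by
        rw [← Int.cast_abs]
        exact_mod_cast (Int.sign_mul_self_eq_abs q).symm
      have h3 : (q : ℝ) * x = N * a := by
        rw [hx]
        have : (q : ℝ) ≠ 0 := by exact_mod_cast hq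
        field_simp
      push_cast
      rw [← Int.self_sub_floor, h2]
      linear_combination (-(q.sign : ℝ)) * h3
    rw [hqx] at hlt
    have h1le : (1 : ℝ) ≤ |(q : ℝ)| * (1 - Int.fract x) := by
      rw [hqx]
      exact_mod_cast Int.add_one_le_iff.2 (Int.cast_pos.1 hlt)
    simp only [hF]
    rw [min_eq_left h1le, mul_one]

/-- The sawtooth sequence `{Nb}` correlates with its own fundamental frequency: the imaginary part
of the first Fourier coefficient of the sawtooth is `∫₀¹ (1/2 - x) sin 2πx dx > 0`. -/
lemma not_tendsto_cesaroMean_fract_self {b : ℝ} (hb : Irrational b) :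
    ¬ Tendsto (cesaroMean fun N => ((Int.fract (N * b) : ℝ) : ℂ) * unitChar (N * (-b))) atTop
      (𝓝 0) := by
  intro h
  have h1 : Tendsto (cesaroMean fun N => (1 / 2 : ℂ) * unitChar (N * (-b))) atTop (𝓝 0) := by
    have := (tendsto_cesaroMean_unitChar fun p => hb.neg.ne_int p).const_mul (1 / 2 : ℂ)
    rw [mul_zero] at this
    exact this.congr fun M => (cesaroMean_const_mul _ _ _).symm
  have h2 := h.sub h1
  simp only [← cesaroMean_sub, sub_zero] at h2
  have h3 := (Complex.continuous_im.tendsto 0).comp h2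
  -- Subtracting the mean `1/2` makes the product with the sine continuous on the circle.
  set G : ℝ → ℝ := fun t => (1 / 2 - t) * Real.sin (2 * Real.pi * t) with hG
  have hGc : Continuous G := by fun_prop
  have h4 := tendsto_cesaroMean_weyl (F := fun t => (G t : ℂ)) hb
    (Complex.continuous_ofReal.comp hGc).continuousOn (by simp [hG])
  rw [intervalIntegral.integral_ofReal] at h4
  have h5 := (Complex.continuous_re.tendsto _).comp h4
  have h6 : ∀ M, (Complex.re ∘ cesaroMean fun N => (G (Int.fract (N * b)) : ℂ)) M =
      (Complex.im ∘ cesaroMean fun N => ((Int.fract (N * b) : ℝ) : ℂ) * unitChar (N * (-b)) -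
        (1 / 2 : ℂ) * unitChar (N * (-b))) M := by
    intro M
    simp only [Function.comp, cesaroMean, Complex.smul_re, Complex.smul_im, Complex.re_sum,
      Complex.im_sum, Complex.ofReal_re]
    congr 1
    refine Finset.sum_congr rfl fun N _ => ?_
    have h7 : ((Int.fract (N * b) : ℝ) : ℂ) * unitChar (N * (-b)) - (1 / 2 : ℂ) * unitChar (N * (-b)) =
        ((Int.fract (N * b) - 1 / 2 : ℝ) : ℂ) * unitChar (N * (-b)) := by
      push_cast
      ring
    rw [h7, Complex.im_ofReal_mul, unitChar_im]
    have h8 : Real.sin (2 * Real.pi * (N * (-b))) =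
        - Real.sin (2 * Real.pi * Int.fract (N * b)) := by
      rw [← Real.sin_neg, ← Real.sin_sub_int_mul_two_pi _ (-⌊N * b⌋)]
      congr 1
      rw [← Int.self_sub_floor]
      push_cast
      ring
    rw [h8]
    simp only [hG]
    ring
  have h7 := tendsto_nhds_unique (h5.congr h6) h3
  have hpos : 0 < ∫ x in (0 : ℝ)..1, G x := by
    refine intervalIntegral.integral_pos one_pos hGc.continuousOn (fun x hx => ?_)
      ⟨1 / 4, by norm_num, ?_⟩
    · have hpi := Real.pi_pos
      rcases le_total x (1 / 2) with hx2 | hx2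
      · exact mul_nonneg (by linarith)
          (Real.sin_nonneg_of_nonneg_of_le_pi (by nlinarith [hx.1]) (by nlinarith))
      · refine mul_nonneg_of_nonpos_of_nonpos (by linarith) ?_
        rw [← Real.sin_sub_two_pi]
        exact Real.sin_nonpos_of_nonpos_of_neg_pi_le (by nlinarith [hx.2]) (by nlinarith)
    · simp only [hG]
      rw [show 2 * Real.pi * (1 / 4) = Real.pi / 2 by ring, Real.sin_pi_div_two]
      norm_num
  simp only [Complex.ofReal_re, Complex.zero_im] at h7
  exact hpos.ne' h7

/-! ### Cancelling frequencies -/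

/-- `FreqLE x y` says that `x` lies in the frequency group `ℤy + ℤ` of the sequence `{Ny}`. -/
def FreqLE (x y : ℝ) : Prop := ∃ n p : ℤ, x = n * y + p

lemma FreqLE.trans {x y z : ℝ} (h : FreqLE x y) (h' : FreqLE y z) : FreqLE x z := by
  obtain ⟨n, p, rfl⟩ := h
  obtain ⟨n', p', rfl⟩ := h'
  exact ⟨n * n', n * p' + p, by push_cast; ring⟩

lemma FreqLE.irrational {x y : ℝ} (h : FreqLE x y) (hx : Irrational x) : Irrational y := by
  obtain ⟨n, p, rfl⟩ := h
  exact (hx.of_add_intCast p).of_intCast_mul n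

/-- Two irrational numbers with the same frequency group agree up to sign modulo `1`. -/
lemma FreqLE.antisymm {x y : ℝ} (hx : Irrational x) (h : FreqLE x y) (h' : FreqLE y x) :
    (∃ p : ℤ, y = x + p) ∨ ∃ p : ℤ, x + y = p := by
  obtain ⟨n, p, h1⟩ := h
  obtain ⟨n', p', h2⟩ := h'
  have h3 : ((1 - n * n' : ℤ) : ℝ) * x = ((n * p' + p : ℤ) : ℝ) := by
    push_cast
    rw [h2] at h1
    linear_combination h1
  have h4 : n * n' = 1 := by
    by_contra hne
    exact (hx.intCast_mul (sub_ne_zero.2 (Ne.symm hne))).ne_int _ h3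
  rcases Int.eq_one_or_neg_one_of_mul_eq_one (mul_comm n n' ▸ h4) with rfl | rfl
  · exact Or.inl ⟨p', by simpa using h2⟩
  · exact Or.inr ⟨p', by rw [h2]; push_cast; ring⟩

/-- If `∑ {N bᵢ}` is eventually constant, then some irrational `bᵢ` is cancelled by a `bⱼ`, i.e.
`bᵢ + bⱼ ∈ ℤ`. Take the frequency `bᵢ` whose group `ℤbᵢ + ℤ` is maximal: only the terms with
`bⱼ ≡ ± bᵢ` contribute to the mean against it, and those with the sign `+` alone cannot cancel. -/
lemma exists_add_eq_int {ι : Type*} [Fintype ι] (b : ι → ℝ) (hirr : ∃ i, Irrational (b i))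
    {c : ℝ} {N₀ : ℕ} (hc : ∀ N : ℕ, N₀ ≤ N → ∑ i, Int.fract (N * b i) = c) :
    ∃ i j, Irrational (b i) ∧ ∃ p : ℤ, b i + b j = p := by
  classical
  obtain ⟨i, hi, hmin⟩ := Finset.exists_min_image
    (Finset.univ.filter fun i => Irrational (b i))
    (fun i => (Finset.univ.filter fun j => FreqLE (b i) (b j)).card)
    (by obtain ⟨i, hi⟩ := hirr; exact ⟨i, by simpa using hi⟩)
  simp only [Finset.mem_filter, Finset.mem_univ, true_and] at hi hmin
  by_contra! hno
  have hmax : ∀ j, FreqLE (b i) (b j) → ∃ p : ℤ, b j = b i + p := by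
    intro j hij
    have hsub : (Finset.univ.filter fun l => FreqLE (b j) (b l)) ⊆
        Finset.univ.filter fun l => FreqLE (b i) (b l) := fun l hl => by
      simp only [Finset.mem_filter, Finset.mem_univ, true_and] at hl ⊢
      exact hij.trans hl
    have heq := Finset.eq_of_subset_of_card_le hsub (hmin j (hij.irrational hi))
    have hji : FreqLE (b j) (b i) := by
      have : i ∈ Finset.univ.filter fun l => FreqLE (b i) (b l) := by
        simpa using ⟨1, 0, by simp⟩
      rw [← heq] at this
      simpa using this
    rcases hij.antisymm hi hji with h | ⟨p, hp⟩
    · exact h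
    · exact absurd hp (hno i j hi p)
  set S : Finset ι := Finset.univ.filter fun j => FreqLE (b i) (b j) with hS
  set T : Finset ι := Finset.univ.filter fun j => ¬ FreqLE (b i) (b j) with hT
  have hiS : i ∈ S := by simpa [hS] using ⟨1, 0, by simp⟩
  set u : ι → ℕ → ℂ := fun j N => ((Int.fract (N * b j) : ℝ) : ℂ) * unitChar (N * (-b i)) with hu
  have hTlim : Tendsto (fun M => ∑ j ∈ T, cesaroMean (u j) M) atTop (𝓝 0) := by
    rw [← Finset.sum_const_zero (s := T)]
    refine tendsto_finsetSum _ fun j hj => tendsto_cesaroMean_fract_twist fun n p hnp => ?_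
    simp only [hT, Finset.mem_filter, Finset.mem_univ, true_and] at hj
    exact hj ⟨n, -p, by push_cast; linarith⟩
  have hSeq : ∀ j ∈ S, u j = u i := fun j hj => by
    obtain ⟨p, hp⟩ := hmax j (by simpa [hS] using hj)
    ext N
    simp only [hu]
    rw [hp, show (N : ℝ) * (b i + p) = N * b i + ((N * p : ℤ) : ℝ) by push_cast; ring,
      Int.fract_add_intCast]
  have hall : Tendsto (fun M => ∑ j, cesaroMean (u j) M) atTop (𝓝 0) := by
    have h1 : Tendsto (cesaroMean fun N => ((∑ j, u j N) - c * unitChar (N * (-b i)))) atTop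
        (𝓝 0) := by
      refine Tendsto.cesaro_smul (tendsto_const_nhds.congr' ?_)
      filter_upwards [eventually_ge_atTop N₀] with N hN
      simp only [hu]
      rw [← Finset.sum_mul, ← hc N hN]
      push_cast
      ring
    have h2 := (tendsto_cesaroMean_unitChar fun p => hi.neg.ne_int p).const_mul (c : ℂ)
    have h3 := h1.add h2
    simp only [mul_zero, add_zero] at h3
    refine h3.congr fun M => ?_
    rw [cesaroMean_sub, cesaroMean_const_mul, sub_add_cancel, cesaroMean_sum]
  have hSlim := hall.sub hTlim
  refine not_tendsto_cesaroMean_fract_self hi ?_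
  have hcard : (S.card : ℂ) ≠ 0 := by
    exact_mod_cast (Finset.card_pos.2 ⟨i, hiS⟩).ne'
  have hfin := hSlim.const_mul ((S.card : ℂ)⁻¹)
  rw [sub_zero, mul_zero] at hfin
  refine hfin.congr fun M => ?_
  rw [← Finset.sum_filter_add_sum_filter_not Finset.univ (fun j => FreqLE (b i) (b j)),
    add_sub_cancel_right, Finset.sum_congr rfl fun j hj => by rw [hSeq j hj], Finset.sum_const,
    nsmul_eq_mul, inv_mul_cancel_left₀ hcard]

/-! ### Covers and sawtooth sums -/

/-- The multiplicity of `N` is `⌈(N+1)/α⌉ - ⌈N/α⌉`, written with `b = -1/α`. -/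
lemma beattyCount_eq_s1 {a : ℝ} (ha : 0 < a) {N : ℕ} (hN : 0 < N) :
    (beattyCount a 0 N : ℝ) =
      1 / a + Int.fract (((N + 1 : ℕ) : ℝ) * (-(1 / a))) - Int.fract (N * (-(1 / a))) := by
  have hN' : (0 : ℝ) < N := by exact_mod_cast hN
  have hset : {n : ℕ | 0 < n ∧ ⌊(n : ℝ) * a + 0⌋ = (N : ℤ)} =
      (Finset.Ico ⌈(N : ℝ) * (1 / a)⌉₊ ⌈((N + 1 : ℕ) : ℝ) * (1 / a)⌉₊ : Set ℕ) := by
    ext n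
    simp only [Set.mem_ofPred_eq, Finset.coe_Ico, Set.mem_Ico, Nat.ceil_le, Nat.lt_ceil, add_zero,
      Int.floor_eq_iff, mul_one_div, div_le_iff₀ ha, lt_div_iff₀ ha]
    push_cast
    refine ⟨fun h => h.2, fun h => ⟨?_, h⟩⟩
    by_contra h0
    obtain rfl : n = 0 := by omega
    simp at h
    linarith
  have hcard : beattyCount a 0 N = ⌈((N + 1 : ℕ) : ℝ) * (1 / a)⌉₊ - ⌈(N : ℝ) * (1 / a)⌉₊ := by
    rw [← Nat.card_Ico]
    change Nat.card {n : ℕ | 0 < n ∧ ⌊(n : ℝ) * a + 0⌋ = (N : ℤ)} = _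
    rw [hset]
    simp
  have hle : ⌈(N : ℝ) * (1 / a)⌉₊ ≤ ⌈((N + 1 : ℕ) : ℝ) * (1 / a)⌉₊ := by
    gcongr
    omega
  have hceil : ∀ M : ℕ, (⌈(M : ℝ) * (1 / a)⌉₊ : ℝ) =
      M * (1 / a) + Int.fract ((M : ℝ) * (-(1 / a))) := fun M => by
    rw [natCast_ceil_eq_intCast_ceil (by positivity), ← Int.self_sub_floor, mul_neg, Int.floor_neg]
    push_cast
    ring
  rw [hcard, Nat.cast_sub hle, hceil, hceil]
  push_cast
  ring

/-- Being an eventual exact cover splits into the density condition and the eventual constancy of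
the sum of sawtooth sequences. The density condition is forced because that sum is bounded. -/
lemma isEECOn_iff {k : ℕ} {α : Fin k → ℝ} (hpos : ∀ i, 0 < α i) (J : Finset (Fin k)) (m : ℕ) :
    IsEECOn α (fun _ => 0) J m ↔ ∑ i ∈ J, 1 / α i = m ∧
      ∃ (N₀ : ℕ) (c : ℝ), ∀ N : ℕ, N₀ ≤ N → ∑ i ∈ J, Int.fract (N * (-(1 / α i))) = c := by
  set D : ℕ → ℝ := fun N => ∑ i ∈ J, Int.fract (N * (-(1 / α i))) with hD
  have hsum : ∀ N : ℕ, 0 < N → ((∑ i ∈ J, beattyCount (α i) 0 N : ℕ) : ℝ) =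
      ∑ i ∈ J, 1 / α i + D (N + 1) - D N := fun N hN => by
    push_cast
    rw [Finset.sum_congr rfl fun i _ => beattyCount_eq_s1 (hpos i) hN, Finset.sum_sub_distrib,
      Finset.sum_add_distrib]
  constructor
  · rintro ⟨N₀, h⟩
    set K : ℕ := N₀.toNat + 1 with hK
    set δ : ℝ := m - ∑ i ∈ J, 1 / α i with hδ
    have hstep : ∀ N : ℕ, K ≤ N → D (N + 1) = D N + δ := fun N hN => by
      have h1 := hsum N (by omega)
      have h2 := h N (by omega)
      simp only at h2
      rw [h2] at h1
      linarith
    have hlin : ∀ n : ℕ, D (K + n) = D K + n * δ := by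
      intro n
      induction n with
      | zero => simp
      | succ n ih =>
        rw [← add_assoc, hstep _ (by omega), ih]
        push_cast
        ring
    have h0 : ∀ N, 0 ≤ D N := fun N => Finset.sum_nonneg fun i _ => Int.fract_nonneg _
    have h1 : ∀ N, D N ≤ J.card := fun N => by
      refine (Finset.sum_le_card_nsmul _ _ 1 fun i _ => (Int.fract_lt_one _).le).trans ?_
      simp
    have hδ0 : δ = 0 := by
      by_contra hne
      obtain ⟨n, hn⟩ := exists_nat_gt (J.card / |δ|)
      rw [div_lt_iff₀ (abs_pos.2 hne)] at hn
      have h2 : (n : ℝ) * |δ| = |D (K + n) - D K| := by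
        rw [hlin, add_sub_cancel_left, abs_mul, Nat.abs_cast]
      have h3 : |D (K + n) - D K| ≤ J.card :=
        abs_le.2 ⟨by linarith [h0 (K + n), h1 K], by linarith [h1 (K + n), h0 K]⟩
      linarith
    refine ⟨by linarith, K, D K, fun N hN => ?_⟩
    obtain ⟨n, rfl⟩ := Nat.exists_eq_add_of_le hN
    change D (K + n) = D K
    rw [hlin, hδ0]
    ring
  · rintro ⟨hm, N₀, c, hc⟩
    refine ⟨N₀ + 1, fun N hN => ?_⟩
    lift N to ℕ using by omega
    have h1 := hsum N (by omega)
    have h2 : D (N + 1) = c := hc (N + 1) (by omega)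
    have h3 : D N = c := hc N (by omega)
    rw [hm, h2, h3, add_sub_cancel_right] at h1
    exact_mod_cast h1

/-- Two homogeneous sequences with irrational slopes and integral total density form an eventual
exact cover, since `{x} + {-x} = 1` for non-integral `x`. -/
lemma isEECOn_pair {k : ℕ} {α : Fin k → ℝ} (hpos : ∀ i, 0 < α i) {i j : Fin k} (hij : i ≠ j)
    (hi : Irrational (α i)) {m : ℕ} (hm : 1 / α i + 1 / α j = m) :
    IsEECOn α (fun _ => 0) {i, j} m := by
  rw [isEECOn_iff hpos, Finset.sum_pair hij]
  refine ⟨hm, 1, 1, fun N hN => ?_⟩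
  rw [Finset.sum_pair hij]
  have hN0 : N ≠ 0 := by omega
  have h1 : (N : ℝ) * (-(1 / α j)) = -((N : ℝ) * (-(1 / α i))) + ((-(N * m) : ℤ) : ℝ) := by
    push_cast
    rw [← hm]
    ring
  have h2 : Int.fract ((N : ℝ) * (-(1 / α i))) ≠ 0 := fun h => by
    rw [Int.fract_eq_zero_iff] at h
    obtain ⟨p, hp⟩ := h
    rw [one_div] at hp
    exact (hi.inv.neg.natCast_mul hN0).ne_int p hp.symm
  rw [h1, Int.fract_add_intCast, Int.fract_neg h2]
  ring

/-! ### The classification -/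

theorem homogeneous_irreducible_mEEC_iff (m k : ℕ) (hm : 0 < m) (α : Fin k → ℝ)
    (hpos : ∀ i, 0 < α i) (hirr : ∃ i, Irrational (α i)) :
    IsIrreducibleEEC α (fun _ => 0) m ↔ (k = 2 ∧ ∑ i, 1 / α i = (m : ℝ)) := by
  have hpos' : ∀ i, 0 < 1 / α i := fun i => one_div_pos.2 (hpos i)
  constructor
  · rintro ⟨hcov, hred⟩
    obtain ⟨hdens, N₀, c, hc⟩ := (isEECOn_iff hpos _ _).1 hcov
    obtain ⟨i, j, hi, p, hp⟩ := exists_add_eq_int (fun i => -(1 / α i))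
      (by obtain ⟨i, hi⟩ := hirr; exact ⟨i, by simpa only [one_div] using hi.inv.neg⟩) hc
    have hi' : Irrational (α i) := by
      rw [one_div] at hi
      exact irrational_inv_iff.1 hi.of_neg
    have hij : i ≠ j := by
      rintro rfl
      exact (hi.natCast_mul two_ne_zero).ne_int p (by push_cast; linarith)
    obtain ⟨m₁, hm₁⟩ : ∃ m₁ : ℕ, 1 / α i + 1 / α j = m₁ := by
      have h1 : (0 : ℝ) ≤ ((-p : ℤ) : ℝ) := by
        push_cast
        linarith [hpos' i, hpos' j]
      refine ⟨(-p).toNat, ?_⟩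
      have h2 : (((-p).toNat : ℤ) : ℝ) = ((-p : ℤ) : ℝ) := by
        rw [Int.toNat_of_nonneg (by exact_mod_cast h1)]
      rw [Int.cast_natCast] at h2
      rw [h2]
      push_cast
      linarith
    have hJ := isEECOn_pair hpos hij hi' hm₁
    have hcompl : ((({i, j} : Finset (Fin k)))ᶜ) = ∅ := by
      by_contra hne
      have hlt : 0 < ∑ l ∈ ({i, j} : Finset (Fin k))ᶜ, 1 / α l :=
        Finset.sum_pos (fun l _ => hpos' l) (Finset.nonempty_iff_ne_empty.2 hne)
      have hadd := Finset.sum_add_sum_compl ({i, j} : Finset (Fin k)) fun l => 1 / α l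
      rw [hdens, Finset.sum_pair hij, hm₁] at hadd
      have hm1pos : 0 < m₁ := by
        have : (0 : ℝ) < m₁ := by linarith [hpos' i, hpos' j]
        exact_mod_cast this
      have hm1lt : m₁ < m := by
        have : (m₁ : ℝ) < m := by linarith
        exact_mod_cast this
      refine hred ⟨m₁, m - m₁, {i, j}, hm1pos, by omega, by omega, hJ, ?_⟩
      obtain ⟨A, hA⟩ := hcov
      obtain ⟨B, hB⟩ := hJ
      refine ⟨max A B, fun N hN => ?_⟩
      have h1 := hA N (le_trans (le_max_left _ _) hN)
      have h2 := hB N (le_trans (le_max_right _ _) hN)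
      rw [← Finset.sum_add_sum_compl ({i, j} : Finset (Fin k)), h2] at h1
      omega
    refine ⟨?_, hdens⟩
    have h1 := Finset.card_add_card_compl ({i, j} : Finset (Fin k))
    rw [hcompl, Finset.card_pair hij, Finset.card_empty, Fintype.card_fin] at h1
    omega
  · rintro ⟨rfl, hdens⟩
    obtain ⟨i, hi⟩ := hirr
    obtain ⟨j, hij, huniv⟩ : ∃ j, i ≠ j ∧ ∀ l, l = i ∨ l = j :=
      ⟨1 - i, by clear hi; revert i; decide, by clear hi; revert i; decide⟩
    have huniv' : (Finset.univ : Finset (Fin 2)) = {i, j} := by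
      ext l
      simpa using huniv l
    refine ⟨?_, ?_⟩
    · rw [huniv', Finset.sum_pair hij] at hdens
      rw [huniv']
      exact isEECOn_pair hpos hij hi hdens
    · -- The part containing `i` would be `{i}` alone, whose density `1 / αᵢ` is irrational.
      have key : ∀ (m₁ m₂ : ℕ) (J : Finset (Fin 2)), 0 < m₂ → i ∈ J →
          IsEECOn α (fun _ => 0) J m₁ → IsEECOn α (fun _ => 0) Jᶜ m₂ → False := by
        intro m₁ m₂ J hm₂ hiJ h1 h2
        have h3 := ((isEECOn_iff hpos _ _).1 h1).1
        have h4 := ((isEECOn_iff hpos _ _).1 h2).1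
        have hj : j ∉ J := fun hjJ => by
          have h5 : Jᶜ = ∅ := by
            ext l
            rcases huniv l with rfl | rfl <;> simp [*]
          rw [h5, Finset.sum_empty] at h4
          exact hm₂.ne (by exact_mod_cast h4)
        have hJ : J = {i} := by
          ext l
          rcases huniv l with rfl | rfl
          · simp [hiJ]
          · simp [hj, hij.symm]
        rw [hJ, Finset.sum_singleton, one_div] at h3
        exact hi.inv.ne_nat m₁ h3
      rintro ⟨m₁, m₂, J, hm₁, hm₂, -, h1, h2⟩
      by_cases hiJ : i ∈ J
      · exact key m₁ m₂ J hm₂ hiJ h1 h2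
      · exact key m₂ m₁ Jᶜ hm₁ (by simpa using hiJ) h2 (by rwa [compl_compl])
end
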